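/- arXiv:1103.0040 — 2 statements merged into one kernel-verified Lean document; each statement's English description precedes it below -/
import Mathlib

section
/- (Poisson rounding is (1-1/e)-approximate.) Let m, n be positive integers, let v_1, …, v_n : 2^[m] → ℝ be normalized, monotone, submodular set functions, and let S_1, …, S_n ⊆ [m] be pairwise disjoint. If for each i a random set S'_i includes each element of S_i independently with probability 1 - 1/e (independently across players and items), then E[ Σ_{i=1}^n v_i(S'_i) ] ≥ (1 - 1/e) · Σ_{i=1}^n v_i(S_i). Equivalently, Σ_{i=1}^n F_{v_i}((1-1/e)·1_{S_i}) ≥ (1 - 1/e) · Σ_{i=1}^n v_i(S_i), where 1_{S_i} is the indicator vector of S_i. -/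
/-!
It suffices to show `F_v(p · 1_S) ≥ p · v(S)` for one normalized submodular `v` and one `p ∈ [0,1]`,
and to sum over the players. For submodular `v`, not necessarily normalized, a `p`-random subset
`R` of `T` satisfies `E[v(R)] ≥ p · v(T) + (1 - p) · v(∅)` (`random_subset_bound`). This follows by
induction on `T`: conditioning on whether a new element `a` is kept, the induction hypothesis
applies to `v` and to the submodular function `A ↦ v (A ∪ {a})`, and the two bounds combine through
`v(T) + v({a}) ≥ v(T ∪ {a}) + v(∅)`.
-/

open Finset

/-- The multilinear extension of a set function `v` on ground set `Fin m`. -/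
noncomputable def multilinearExt {m : ℕ} (v : Finset (Fin m) → ℝ) (x : Fin m → ℝ) : ℝ :=
  ∑ S : Finset (Fin m), v S * ((∏ j ∈ S, x j) * ∏ j ∈ Sᶜ, (1 - x j))

/-- For `p ∈ [0,1]`, the multilinear extension at `p · 1_T` is the expectation of `v` over the subset
of `T` keeping each element independently with probability `p`: a set that is not contained in `T`
has weight zero. -/
lemma multilinearExt_indicator {m : ℕ} (v : Finset (Fin m) → ℝ) (T : Finset (Fin m)) (p : ℝ) :
    multilinearExt v (fun j => if j ∈ T then p else 0)
      = ∑ A ∈ T.powerset, v A * (p ^ #A * (1 - p) ^ #(T \ A)) := by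
  unfold multilinearExt
  rw [← Finset.sum_subset (Finset.subset_univ T.powerset)]
  · refine Finset.sum_congr rfl fun A hA => ?_
    have hAT := Finset.mem_powerset.mp hA
    congr 2
    · rw [Finset.prod_congr rfl (fun j hj => if_pos (hAT hj)), Finset.prod_const]
    · have hsub : T \ A ⊆ Aᶜ := fun j hj => by
        simpa using (Finset.mem_sdiff.mp hj).2
      rw [← Finset.prod_subset hsub, ← Finset.prod_const]
      · refine Finset.prod_congr rfl fun j hj => ?_
        simp [(Finset.mem_sdiff.mp hj).1]
      · intro j hj hj'
        have hjT : j ∉ T := fun h =>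
          hj' (Finset.mem_sdiff.mpr ⟨h, Finset.mem_compl.mp hj⟩)
        simp [hjT]
  · intro A _ hA
    obtain ⟨j, hjA, hjT⟩ := Finset.not_subset.mp (fun h => hA (Finset.mem_powerset.mpr h))
    rw [Finset.prod_eq_zero hjA (if_neg hjT)]
    simp

/-- `E[v(R)] ≥ p · v(T) + (1 - p) · v(∅)` for submodular `v` and a `p`-random subset `R` of `T`.
The function `v` is not assumed normalized, because the induction passes from `v` to
`A ↦ v (insert a A)`. -/
lemma random_subset_bound {α : Type*} [DecidableEq α] {p : ℝ} (hp0 : 0 ≤ p) (hp1 : p ≤ 1)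
    (T : Finset α) (v : Finset α → ℝ)
    (hv : ∀ A B : Finset α, v A + v B ≥ v (A ∪ B) + v (A ∩ B)) :
    p * v T + (1 - p) * v ∅ ≤ ∑ A ∈ T.powerset, v A * (p ^ #A * (1 - p) ^ #(T \ A)) := by
  induction T using Finset.induction_on generalizing v with
  | empty => simp; linarith
  | insert a T ha ih =>
    rw [Finset.sum_powerset_insert ha]
    have h1 := ih v hv
    have h2 := ih (fun A => v (insert a A)) fun A B => by
      have h := hv (insert a A) (insert a B)
      rwa [← Finset.insert_union_distrib, ← Finset.insert_inter_distrib] at h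
    have e1 : ∑ A ∈ T.powerset, v A * (p ^ #A * (1 - p) ^ #(insert a T \ A))
        = (1 - p) * ∑ A ∈ T.powerset, v A * (p ^ #A * (1 - p) ^ #(T \ A)) := by
      rw [Finset.mul_sum]
      refine Finset.sum_congr rfl fun A hA => ?_
      have haA : a ∉ A := fun h => ha (Finset.mem_powerset.mp hA h)
      rw [Finset.insert_sdiff_of_notMem _ haA, Finset.card_insert_of_notMem (by simp [ha])]
      ring
    have e2 : ∑ A ∈ T.powerset,
          v (insert a A) * (p ^ #(insert a A) * (1 - p) ^ #(insert a T \ insert a A))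
        = p * ∑ A ∈ T.powerset, v (insert a A) * (p ^ #A * (1 - p) ^ #(T \ A)) := by
      rw [Finset.mul_sum]
      refine Finset.sum_congr rfl fun A hA => ?_
      have haA : a ∉ A := fun h => ha (Finset.mem_powerset.mp hA h)
      rw [Finset.card_insert_of_notMem haA, Finset.insert_sdiff_insert,
        Finset.sdiff_insert_of_notMem ha]
      ring
    rw [e1, e2]
    have h3 : v T + v {a} ≥ v (insert a T) + v ∅ := by
      have h := hv T {a}
      rwa [Finset.union_singleton, Finset.inter_singleton_of_notMem ha] at h
    have h1' := mul_le_mul_of_nonneg_left h1 (sub_nonneg.mpr hp1)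
    have h2' := mul_le_mul_of_nonneg_left h2 hp0
    have h3' := mul_le_mul_of_nonneg_left h3 (mul_nonneg hp0 (sub_nonneg.mpr hp1))
    simp only [insert_empty_eq] at h2'
    linarith

/-- Poisson rounding is `(1-1/e)`-approximate: for normalized, monotone, submodular
valuations `v i` and pairwise disjoint bundles `S i`, rounding each bundle by keeping each
item independently with probability `1 - 1/e` preserves a `(1-1/e)` fraction of the welfare:
`Σ_i F_{v_i}((1-1/e)·1_{S_i}) ≥ (1-1/e) · Σ_i v_i(S_i)`. -/
theorem poisson_rounding_approx
    (m n : ℕ) (hm : 0 < m) (hn : 0 < n)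
    (v : Fin n → Finset (Fin m) → ℝ)
    (hnorm : ∀ i, v i ∅ = 0)
    (hmono : ∀ i, ∀ A B : Finset (Fin m), A ⊆ B → v i A ≤ v i B)
    (hsub : ∀ i, ∀ A B : Finset (Fin m), v i A + v i B ≥ v i (A ∪ B) + v i (A ∩ B))
    (S : Fin n → Finset (Fin m))
    (hdisj : ∀ i i', i ≠ i' → Disjoint (S i) (S i')) :
    ∑ i, multilinearExt (v i) (fun j => if j ∈ S i then 1 - 1 / Real.exp 1 else 0)
      ≥ (1 - 1 / Real.exp 1) * ∑ i, v i (S i) := by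
  have he : 1 / Real.exp 1 ≤ 1 := by
    rw [div_le_one (Real.exp_pos 1)]
    exact Real.one_le_exp zero_le_one
  have he0 : 0 ≤ 1 / Real.exp 1 := by positivity
  rw [ge_iff_le, Finset.mul_sum]
  refine Finset.sum_le_sum fun i _ => ?_
  rw [multilinearExt_indicator]
  have h := random_subset_bound (sub_nonneg.mpr he) (sub_le_self 1 he0) (S i) (v i) (hsub i)
  rwa [hnorm i, mul_zero, add_zero] at h
end

section
/- Let v : 2^[m] → ℝ≥0 be a matroid rank sum function, i.e., v(S) = Σ_{ℓ=1}^κ w_ℓ · u_ℓ(S) for all S ⊆ [m], where u_1, …, u_κ : 2^[m] → ℕ are rank functions of matroids on ground set [m] and w_1, …, w_κ ≥ 0. Then for every S ⊆ [m], the discrete Hessian matrix H^v_S is negative semidefinite. -/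
/-!
Fix a matroid with rank function `r` and closure operator `cl`, and a set `S`. Adding `e` to `X`
raises `r` by one exactly when `e ∉ cl X`, so the `(j, k)` entry of the discrete Hessian of `r` at
`S` is `-1` if `j, k ∉ cl S` and `k ∈ cl (S ∪ {j})`, and `0` otherwise. By the exchange property the
first case says that `j` and `k` are *parallel* over `S`: both lie outside `cl S`, and
`cl (S ∪ {j}) = cl (S ∪ {k})`. Parallelism is an equivalence relation on the complement of `cl S`,
whose classes are labelled by the flats `F = cl (S ∪ {j})`; hence the Hessian is `-∑_F a_F a_Fᵀ`,
with `a_F` the indicator vector of the class of `F` (`discreteHessian_matroidRank`), and the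
quadratic form is minus a sum of squares. A rank sum inherits this by linearity, the weights being
nonnegative.
-/

open Finset Matrix
open scoped Classical

/-- The rank function of a matroid `M` on ground set `Fin m`: the maximum cardinality of an
independent set contained in `A`. -/
noncomputable def matroidRank {m : ℕ} (M : Matroid (Fin m)) (A : Finset (Fin m)) : ℕ :=
  (A.powerset.filter (fun I : Finset (Fin m) => M.Indep (I : Set (Fin m)))).sup Finset.card

/-- The discrete Hessian matrix of a set function `v` at `S`:
`H^v_S(j,k) = v(S ∪ {j,k}) − v(S ∪ {j}) − v(S ∪ {k}) + v(S)`. -/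
def discreteHessian {m : ℕ} (v : Finset (Fin m) → ℝ) (S : Finset (Fin m)) :
    Matrix (Fin m) (Fin m) ℝ :=
  Matrix.of fun j k => v (S ∪ {j, k}) - v (S ∪ {j}) - v (S ∪ {k}) + v S

lemma matroidRank_cast_eq_eRk {m : ℕ} (M : Matroid (Fin m)) (A : Finset (Fin m)) :
    (matroidRank M A : ℕ∞) = M.eRk (A : Set (Fin m)) := by
  apply le_antisymm
  · obtain ⟨I, hI, hsup⟩ := Finset.exists_mem_eq_sup
      (A.powerset.filter (fun I : Finset (Fin m) => M.Indep (I : Set (Fin m))))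
      ⟨∅, by simp⟩ Finset.card
    rw [Finset.mem_filter, Finset.mem_powerset] at hI
    rw [matroidRank, hsup, ← Set.encard_coe_eq_coe_finsetCard]
    exact hI.2.encard_le_eRk_of_subset (by exact_mod_cast hI.1)
  · rw [Matroid.eRk_le_iff]
    intro I hIA hI
    have hc : ((I.toFinset : Finset (Fin m)) : Set (Fin m)) = I := Set.coe_toFinset I
    rw [← hc, Set.encard_coe_eq_coe_finsetCard, Nat.cast_le]
    refine Finset.le_sup (f := Finset.card) ?_
    rw [Finset.mem_filter, Finset.mem_powerset, hc, ← Finset.coe_subset, hc]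
    exact ⟨hIA, hI⟩

lemma matroidRank_insert {m : ℕ} (M : Matroid (Fin m)) (hE : M.E = Set.univ)
    (X : Finset (Fin m)) (e : Fin m) :
    matroidRank M (insert e X) =
      matroidRank M X + if e ∈ M.closure (X : Set (Fin m)) then 0 else 1 := by
  have h : ((matroidRank M (insert e X) : ℕ) : ℕ∞) =
      ((matroidRank M X + if e ∈ M.closure (X : Set (Fin m)) then 0 else 1 : ℕ) : ℕ∞) := by
    rw [Nat.cast_add, matroidRank_cast_eq_eRk, matroidRank_cast_eq_eRk, Finset.coe_insert]
    split_ifs with he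
    · rw [← M.eRk_insert_closure_eq, Set.insert_eq_of_mem he, M.eRk_closure_eq]
      simp
    · rw [M.eRk_insert_eq_add_one ⟨by simp [hE], he⟩]
      simp
  exact_mod_cast h

/-- The indicator vector of the parallel class over `S` with closure `F`: the elements `j` outside
the closure of `S` for which `S ∪ {j}` has closure `F`. It is zero for every other set `F`. -/
noncomputable def parallelIndicator {m : ℕ} (M : Matroid (Fin m)) (S : Finset (Fin m))
    (F : Set (Fin m)) (j : Fin m) : ℝ :=
  if j ∉ M.closure (S : Set (Fin m)) ∧ M.closure (insert j (S : Set (Fin m))) = F then 1 else 0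

/-- The Hessian of a matroid rank function is minus the Gram-type sum `∑_F a_F a_Fᵀ` over the
indicators `a_F` of the parallel classes. -/
lemma discreteHessian_matroidRank {m : ℕ} (M : Matroid (Fin m)) (hE : M.E = Set.univ)
    (S : Finset (Fin m)) (j k : Fin m) :
    discreteHessian (fun A => (matroidRank M A : ℝ)) S j k =
      -∑ F : Set (Fin m), parallelIndicator M S F j * parallelIndicator M S F k := by
  have hsum : ∑ F : Set (Fin m), parallelIndicator M S F j * parallelIndicator M S F k =
      if j ∉ M.closure (S : Set (Fin m)) ∧ k ∉ M.closure (S : Set (Fin m)) ∧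
        M.closure (insert j (S : Set (Fin m))) = M.closure (insert k (S : Set (Fin m)))
      then 1 else 0 := by
    -- only the flat spanned by `S ∪ {j}` can contribute
    rw [Finset.sum_eq_single (M.closure (insert j (S : Set (Fin m))))]
    · simp only [parallelIndicator]
      split_ifs <;> simp_all
    · intro F _ hF
      simp [parallelIndicator, hF.symm]
    · simp
  -- exchange: outside the closure of `S`, spanning modulo `S` is the same as being parallel
  have hpar : k ∉ M.closure (S : Set (Fin m)) →
      (k ∈ M.closure (insert j (S : Set (Fin m))) ↔
        M.closure (insert j (S : Set (Fin m))) = M.closure (insert k (S : Set (Fin m)))) := by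
    intro hk
    refine ⟨fun h => (M.closure_insert_congr ⟨h, hk⟩).symm, fun h => ?_⟩
    rw [h]
    exact M.mem_closure_of_mem (Set.mem_insert _ _) (by simp [hE])
  have hmono : k ∈ M.closure (S : Set (Fin m)) → k ∈ M.closure (insert j (S : Set (Fin m))) :=
    fun h => M.closure_subset_closure (Set.subset_insert _ _) h
  have hjk : S ∪ {j, k} = insert k (insert j S) := by
    ext x; simp only [Finset.mem_union, Finset.mem_insert, Finset.mem_singleton]; tauto
  have hsing : ∀ x, S ∪ {x} = insert x S := fun x => by
    rw [Finset.union_comm, Finset.insert_eq]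
  -- if `j` is spanned by `S`, adding it does not change the closure
  have hj : j ∈ M.closure (S : Set (Fin m)) →
      M.closure (insert j (S : Set (Fin m))) = M.closure (S : Set (Fin m)) := by
    intro h
    rw [← M.closure_insert_closure_eq_closure_insert, Set.insert_eq_of_mem h, M.closure_closure]
  rw [hsum, discreteHessian, Matrix.of_apply, hjk, hsing, hsing, matroidRank_insert M hE (insert j S),
    matroidRank_insert M hE S j, matroidRank_insert M hE S k, Finset.coe_insert]
  by_cases h1 : j ∈ M.closure (S : Set (Fin m))
  · rw [hj h1]
    simp [h1]
  · by_cases h2 : k ∈ M.closure (S : Set (Fin m))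
    · simp [h1, h2, hmono h2]
    · simp only [hpar h2, h1, h2]
      split_ifs <;> simp_all

lemma matroidRank_discreteHessian_negSemidef {m : ℕ} (M : Matroid (Fin m)) (hE : M.E = Set.univ)
    (S : Finset (Fin m)) (z : Fin m → ℝ) :
    z ⬝ᵥ (discreteHessian (fun A => (matroidRank M A : ℝ)) S *ᵥ z) ≤ 0 := by
  have h : discreteHessian (fun A => (matroidRank M A : ℝ)) S =
      -∑ F : Set (Fin m), vecMulVec (parallelIndicator M S F) (parallelIndicator M S F) := by
    ext j k
    rw [discreteHessian_matroidRank M hE, Matrix.neg_apply, Matrix.sum_apply]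
    rfl
  rw [h, Matrix.neg_mulVec, dotProduct_neg, neg_nonpos, Matrix.sum_mulVec, dotProduct_sum]
  refine Finset.sum_nonneg fun F _ => ?_
  have hsq : z ⬝ᵥ (vecMulVec (parallelIndicator M S F) (parallelIndicator M S F) *ᵥ z) =
      (z ⬝ᵥ parallelIndicator M S F) ^ 2 := by
    rw [dotProduct_mulVec, vecMul_vecMulVec, smul_dotProduct, smul_eq_mul,
      dotProduct_comm _ z, sq]
  rw [hsq]
  exact sq_nonneg _

/-- A matroid rank sum function (a nonnegative weighted sum of matroid rank functions)
has a negative semidefinite discrete Hessian at every `S`: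
`zᵀ H^v_S z ≤ 0` for every `z ∈ ℝ^m`. -/
theorem matroidRankSum_discreteHessian_negSemidef
    (m κ : ℕ) (v : Finset (Fin m) → ℝ)
    (w : Fin κ → ℝ) (hw : ∀ l, 0 ≤ w l)
    (M : Fin κ → Matroid (Fin m)) (hE : ∀ l, (M l).E = Set.univ)
    (hv : ∀ S : Finset (Fin m), v S = ∑ l, w l * (matroidRank (M l) S : ℝ)) :
    ∀ S : Finset (Fin m), ∀ z : Fin m → ℝ,
      z ⬝ᵥ (discreteHessian v S *ᵥ z) ≤ 0 := by
  intro S z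
  have h : discreteHessian v S =
      ∑ l, w l • discreteHessian (fun A => (matroidRank (M l) A : ℝ)) S := by
    ext j k
    rw [Matrix.sum_apply]
    simp only [discreteHessian, Matrix.of_apply, Matrix.smul_apply, smul_eq_mul, hv, mul_add,
      mul_sub, Finset.sum_add_distrib, Finset.sum_sub_distrib]
  rw [h, Matrix.sum_mulVec, dotProduct_sum]
  refine Finset.sum_nonpos fun l _ => ?_
  rw [Matrix.smul_mulVec, dotProduct_smul, smul_eq_mul]
  exact mul_nonpos_of_nonneg_of_nonpos (hw l)
    (matroidRank_discreteHessian_negSemidef (M l) (hE l) S z)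
end
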